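/- arXiv:1907.07089 — 2 statements merged into one kernel-verified Lean document; each statement's English description precedes it below -/
import Mathlib

section
/- Let A be a real n×n matrix such that A + Aᵀ is positive definite. Then for every symmetric positive definite real n×n matrix H, both HA and A + H are positive stable (all their complex eigenvalues have positive real part); in particular A is multiplicative H-stable. -/
open Matrix

/-- The spectrum of a real square matrix, viewed as a subset of `ℂ`:
the set of complex roots of its characteristic polynomial. -/
def spec {m : Type*} [Fintype m] [DecidableEq m] (M : Matrix m m ℝ) : Set ℂ :=
  spectrum ℂ (M.map (Complex.ofReal ·))

/-- A real square matrix is positive stable if every eigenvalue has positive real part. -/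
def PosStable {m : Type*} [Fintype m] [DecidableEq m] (M : Matrix m m ℝ) : Prop :=
  ∀ z ∈ spec M, 0 < z.re

/-- A real matrix `W` is positive definite (as a quadratic form):
`xᵀ W x > 0` for every nonzero real vector `x`. -/
def PosDefQ {n : ℕ} (W : Matrix (Fin n) (Fin n) ℝ) : Prop :=
  ∀ x : Fin n → ℝ, x ≠ 0 → 0 < x ⬝ᵥ (W *ᵥ x)

/-! An eigenvalue `z` of `A`, or of `H A`, satisfies `A v = z P v` for some `v ≠ 0` and a positive
semidefinite `P`: namely `P = 1`, or `P = H⁻¹`. Pairing with `v` gives `v* A v = z (v* P v)`, whose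
left side has positive real part because `A + Aᴴ` is positive definite, while `v* P v ≥ 0`; hence
`re z > 0`. Adding to `A` a matrix with positive semidefinite Hermitian part keeps `A + Aᴴ` positive
definite, which covers `A + H`. For real matrices, positive definiteness survives complexification
because it amounts to a factorization `Bᵀ B` with `B` invertible. -/

section Pencil

open scoped ComplexOrder

variable {ι 𝕜 : Type*} [Fintype ι] [RCLike 𝕜] {A H P : Matrix ι ι 𝕜} {z : 𝕜}

lemma re_dotProduct_add_conjTranspose_mulVec (A : Matrix ι ι 𝕜) (v : ι → 𝕜) :
    RCLike.re (star v ⬝ᵥ ((A + Aᴴ) *ᵥ v)) = 2 * RCLike.re (star v ⬝ᵥ (A *ᵥ v)) := by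
  have hstar : star v ⬝ᵥ (Aᴴ *ᵥ v) = star (star v ⬝ᵥ (A *ᵥ v)) := by
    rw [star_dotProduct, star_mulVec, conjTranspose_conjTranspose, dotProduct_mulVec]
  rw [add_mulVec, dotProduct_add, hstar, map_add, RCLike.star_def, RCLike.conj_re, two_mul]

lemma re_pos_of_mulVec_eq_smul_mulVec (hA : (A + Aᴴ).PosDef) (hP : P.PosSemidef) {v : ι → 𝕜}
    (hv : v ≠ 0) (h : A *ᵥ v = z • (P *ᵥ v)) : 0 < RCLike.re z := by
  have hAv : 0 < RCLike.re (star v ⬝ᵥ (A *ᵥ v)) := by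
    have := hA.re_dotProduct_pos hv
    rw [re_dotProduct_add_conjTranspose_mulVec] at this
    linarith
  obtain ⟨hre, him⟩ := RCLike.nonneg_iff.mp (hP.dotProduct_mulVec_nonneg v)
  rw [h, dotProduct_smul, smul_eq_mul, RCLike.mul_re, him, mul_zero, sub_zero] at hAv
  exact pos_of_mul_pos_left hAv hre

variable [DecidableEq ι]

lemma exists_mulVec_eq_smul_of_mem_spectrum {K : Type*} [Field K] {M : Matrix ι ι K} {z : K}
    (hz : z ∈ spectrum K M) : ∃ v ≠ 0, M *ᵥ v = z • v := by
  rw [← spectrum_toLin'] at hz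
  obtain ⟨v, hv⟩ := (Module.End.HasEigenvalue.of_mem_spectrum hz).exists_hasEigenvector
  exact ⟨v, hv.2, by simpa only [toLin'_apply] using hv.apply_eq_smul⟩

lemma re_pos_of_mem_spectrum (hA : (A + Aᴴ).PosDef) (hz : z ∈ spectrum 𝕜 A) :
    0 < RCLike.re z := by
  obtain ⟨v, hv, hAv⟩ := exists_mulVec_eq_smul_of_mem_spectrum hz
  exact re_pos_of_mulVec_eq_smul_mulVec hA .one hv (by rwa [one_mulVec])

lemma re_pos_of_mem_spectrum_mul (hA : (A + Aᴴ).PosDef) (hH : H.PosDef)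
    (hz : z ∈ spectrum 𝕜 (H * A)) : 0 < RCLike.re z := by
  obtain ⟨v, hv, hHAv⟩ := exists_mulVec_eq_smul_of_mem_spectrum hz
  refine re_pos_of_mulVec_eq_smul_mulVec hA hH.inv.posSemidef hv ?_
  calc A *ᵥ v = H⁻¹ *ᵥ ((H * A) *ᵥ v) := by
        rw [mulVec_mulVec, nonsing_inv_mul_cancel_left _ _ ((isUnit_iff_isUnit_det H).mp hH.isUnit)]
    _ = z • (H⁻¹ *ᵥ v) := by rw [hHAv, mulVec_smul]

theorem stmt16_general (hA : (A + Aᴴ).PosDef) :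
    (∀ H : Matrix ι ι 𝕜, H.PosDef → ∀ z ∈ spectrum 𝕜 (H * A), 0 < RCLike.re z) ∧
      ∀ H : Matrix ι ι 𝕜, (H + Hᴴ).PosSemidef → ∀ z ∈ spectrum 𝕜 (A + H), 0 < RCLike.re z := by
  refine ⟨fun H hH z hz ↦ re_pos_of_mem_spectrum_mul hA hH hz,
    fun H hH z hz ↦ re_pos_of_mem_spectrum ?_ hz⟩
  rw [conjTranspose_add, add_add_add_comm]
  exact hA.add_posSemidef hH

end Pencil

section Complexification

open scoped ComplexOrder MatrixOrder

variable {𝕜 : Type*} [RCLike 𝕜]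

lemma conjTranspose_map_algebraMap_real {m n : Type*} (B : Matrix m n ℝ) :
    (B.map (algebraMap ℝ 𝕜))ᴴ = Bᵀ.map (algebraMap ℝ 𝕜) := by
  rw [← conjTranspose_map, conjTranspose_eq_transpose_of_trivial]
  exact fun r ↦ (RCLike.conj_ofReal r).symm

lemma posDef_map_algebraMap_real {ι : Type*} [Finite ι] {W : Matrix ι ι ℝ} (hW : W.PosDef) :
    (W.map (algebraMap ℝ 𝕜)).PosDef := by
  classical
  cases nonempty_fintype ι
  have hunit : IsUnit (W.map (algebraMap ℝ 𝕜)) := hW.isUnit.map (algebraMap ℝ 𝕜).mapMatrix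
  obtain ⟨B, rfl⟩ := CStarAlgebra.nonneg_iff_eq_star_mul_self.mp hW.posSemidef.nonneg
  rw [star_eq_conjTranspose, conjTranspose_eq_transpose_of_trivial, Matrix.map_mul,
    ← conjTranspose_map_algebraMap_real] at hunit ⊢
  exact (posSemidef_conjTranspose_mul_self _).posDef_iff_isUnit.mpr hunit

end Complexification

section PosDefQ

open scoped ComplexOrder

variable {n : ℕ} {W : Matrix (Fin n) (Fin n) ℝ}

lemma PosDefQ.posDef (hW : PosDefQ W) (hs : W.IsSymm) : W.PosDef :=
  .of_dotProduct_mulVec_pos (isHermitian_iff_isSymm.mpr hs) fun x hx ↦ by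
    simpa only [star_trivial] using hW x hx

lemma PosDefQ.add_transpose (hW : PosDefQ W) : PosDefQ (W + Wᵀ) := fun x hx ↦ by
  rw [add_mulVec, dotProduct_add, mulVec_transpose, dotProduct_comm x (x ᵥ* W),
    ← dotProduct_mulVec]
  exact add_pos (hW x hx) (hW x hx)

lemma PosDefQ.posDef_map (hW : PosDefQ W) (hs : W.IsSymm) : (W.map (algebraMap ℝ ℂ)).PosDef :=
  posDef_map_algebraMap_real (hW.posDef hs)

lemma PosDefQ.posDef_map_add_conjTranspose (hW : PosDefQ (W + Wᵀ)) :
    (W.map (algebraMap ℝ ℂ) + (W.map (algebraMap ℝ ℂ))ᴴ).PosDef := by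
  rw [conjTranspose_map_algebraMap_real, ← Matrix.map_add _ (map_add _)]
  exact hW.posDef_map (isSymm_add_transpose_self W)

lemma PosDefQ.posSemidef_map_add_conjTranspose (hW : PosDefQ W) :
    (W.map (algebraMap ℝ ℂ) + (W.map (algebraMap ℝ ℂ))ᴴ).PosSemidef :=
  hW.add_transpose.posDef_map_add_conjTranspose.posSemidef

end PosDefQ

lemma posStable_iff {m : Type*} [Fintype m] [DecidableEq m] {M : Matrix m m ℝ} :
    PosStable M ↔ ∀ z ∈ spectrum ℂ (M.map (algebraMap ℝ ℂ)), 0 < RCLike.re z :=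
  Iff.rfl

theorem stmt16 {n : ℕ} (A : Matrix (Fin n) (Fin n) ℝ)
    (hA : PosDefQ (A + Aᵀ)) :
    ∀ H : Matrix (Fin n) (Fin n) ℝ, H.IsSymm → PosDefQ H →
      PosStable (H * A) ∧ PosStable (A + H) := by
  intro H hs hH
  rw [posStable_iff, posStable_iff, Matrix.map_mul, Matrix.map_add _ (map_add _)]
  exact (stmt16_general hA.posDef_map_add_conjTranspose).imp (· _ (hH.posDef_map hs))
    (· _ hH.posSemidef_map_add_conjTranspose)
end

section
/- Let A be a positive stable real n×n matrix (every λ ∈ σ(A) has Re λ > 0). Then there exists a symmetric positive definite real n×n matrix P with PA + AᵀP positive definite such that for every symmetric positive definite real n×n matrix G commuting with P (GP = PG), both AG and A + G are positive stable. -/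
open Matrix

/-!
Everything rests on Lyapunov solutions: strictly positive `p` with `p a + a* p` strictly positive.
If the spectrum of `a` lies in the open right half-plane, that of its Cayley transform `b` lies in
the open unit disc, so `‖bᵏ‖ < 1` for some `k` by Gelfand's formula. For `p = ∑ j < k, (bʲ)* bʲ` the
difference `p - b* p b` telescopes to `1 - (bᵏ)* bᵏ`, which is strictly positive, and conjugating it
by `1 + a` gives `2 (p a + a* p)`. Conversely, a Lyapunov solution for `a` makes `a` invertible; it
remains a Lyapunov solution for `a - z` when `Re z ≤ 0`, so the spectrum of `a` lies in the open
right half-plane. Finally, if `p` solves for `a` and `g` is strictly positive and commutes with `p`,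
then `g p` solves for `a g`, because `(g p)(a g) + (a g)*(g p) = g (p a + a* p) g`, and `p` solves
for `a + g`. For a real matrix `a`, the entrywise real part of a complex solution is a solution.
-/

open Filter
open scoped ComplexOrder MatrixOrder Matrix.Norms.L2Operator Ring

section BanachAlgebra

variable {𝒜 : Type*} [NormedRing 𝒜] [NormedAlgebra ℂ 𝒜] [CompleteSpace 𝒜]

lemma eventually_norm_pow_lt_one {b : 𝒜} (hb : ∀ z ∈ spectrum ℂ b, ‖z‖ < 1) :
    ∀ᶠ k : ℕ in atTop, ‖b ^ k‖ < 1 := by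
  nontriviality 𝒜
  have hr : spectralRadius ℂ b < (1 : NNReal) :=
    spectrum.spectralRadius_lt_of_forall_lt b fun z hz => by exact_mod_cast hb z hz
  filter_upwards [(spectrum.pow_norm_pow_one_div_tendsto_nhds_spectralRadius b).eventually_lt_const
    hr, eventually_gt_atTop 0] with k hroot hk
  rw [ENNReal.coe_one, ENNReal.ofReal_lt_one] at hroot
  contrapose! hroot
  exact Real.one_le_rpow hroot (by positivity)

end BanachAlgebra

lemma norm_lt_one_of_re_one_sub_div_one_add_pos {z : ℂ}
    (hz : 0 < ((1 - z) / (1 + z)).re) : ‖z‖ < 1 := by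
  have hden : 0 < Complex.normSq (1 + z) := by
    refine Complex.normSq_pos.2 fun h => ?_
    simp [h] at hz
  rw [Complex.div_re, ← add_div, div_pos_iff_of_pos_right hden] at hz
  have hsq : ‖z‖ ^ 2 < 1 := by
    rw [← Complex.normSq_eq_norm_sq, Complex.normSq_apply]
    simp only [Complex.sub_re, Complex.add_re, Complex.one_re, Complex.sub_im, Complex.add_im,
      Complex.one_im] at hz
    linarith
  exact (sq_lt_one_iff₀ (norm_nonneg z)).1 hsq

section CayleyTransform

variable {𝒜 : Type*} [Ring 𝒜]

/-- The Cayley transform `(1 - a) (1 + a)⁻¹`, which carries the spectrum from the right half-plane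
to the unit disc. It is `0` when `1 + a` is not invertible. -/
noncomputable def cayleyTransform (a : 𝒜) : 𝒜 :=
  (1 - a) * (1 + a)⁻¹ʳ

lemma cayleyTransform_mul_one_add {a : 𝒜} (ha : IsUnit (1 + a)) :
    cayleyTransform a * (1 + a) = 1 - a := by
  rw [cayleyTransform, Ring.inverse_mul_cancel_right _ _ ha]

lemma div_mem_spectrum_of_mem_spectrum_cayleyTransform {𝕜 : Type*} [Field 𝕜] [NeZero (2 : 𝕜)]
    [Algebra 𝕜 𝒜] {a : 𝒜} (ha : IsUnit (1 + a)) {z : 𝕜}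
    (hz : z ∈ spectrum 𝕜 (cayleyTransform a)) : (1 - z) / (1 + z) ∈ spectrum 𝕜 a := by
  have hmul : (algebraMap 𝕜 𝒜 z - cayleyTransform a) * (1 + a) = (z - 1) • 1 + (z + 1) • a := by
    rw [sub_mul, cayleyTransform_mul_one_add ha, Algebra.algebraMap_eq_smul_one]
    simp only [smul_one_mul, sub_smul, add_smul, smul_add, one_smul]
    abel
  have hnot : ¬ IsUnit ((z - 1) • (1 : 𝒜) + (z + 1) • a) := by
    rwa [← hmul, ha.mul_right_iff]
  have hne : 1 + z ≠ 0 := by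
    intro h
    obtain rfl : z = -1 := by linear_combination h
    have htwo : (-1 - 1 : 𝕜) ≠ 0 := by
      rw [← neg_add', one_add_one_eq_two]
      exact neg_ne_zero.2 two_ne_zero
    refine hnot ?_
    rw [neg_add_cancel, zero_smul, add_zero, ← Algebra.algebraMap_eq_smul_one]
    exact (IsUnit.mk0 _ htwo).map (algebraMap 𝕜 𝒜)
  have hfactor : (z - 1) • (1 : 𝒜) + (z + 1) • a =
      Units.mk0 (-(1 + z)) (neg_ne_zero.2 hne) • (algebraMap 𝕜 𝒜 ((1 - z) / (1 + z)) - a) := by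
    rw [Units.smul_mk0, smul_sub, Algebra.algebraMap_eq_smul_one, smul_smul, neg_mul,
      mul_div_cancel₀ _ hne, neg_sub, neg_smul, sub_neg_eq_add, add_comm 1 z]
  rwa [hfactor, isUnit_smul_iff] at hnot

variable [Algebra ℂ 𝒜] {a : 𝒜}

lemma isUnit_one_add_of_spectrum_re_pos (ha : ∀ z ∈ spectrum ℂ a, 0 < z.re) :
    IsUnit (1 + a) := by
  have h : (-1 : ℂ) ∉ spectrum ℂ a := fun h => by
    have := ha _ h
    norm_num at this
  rw [spectrum.notMem_iff] at h
  simpa [add_comm] using h.neg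

lemma norm_lt_one_of_mem_spectrum_cayleyTransform (ha : ∀ z ∈ spectrum ℂ a, 0 < z.re) {z : ℂ}
    (hz : z ∈ spectrum ℂ (cayleyTransform a)) : ‖z‖ < 1 :=
  norm_lt_one_of_re_one_sub_div_one_add_pos <| ha _ <|
    div_mem_spectrum_of_mem_spectrum_cayleyTransform (isUnit_one_add_of_spectrum_re_pos ha) hz

end CayleyTransform

section SteinEquation

variable {𝒜 : Type*} [Ring 𝒜] [StarRing 𝒜]

/-- The partial sum `∑ j < k, (bʲ)* bʲ` of the series solving the Stein equation
`p - b* p b = 1`. -/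
def steinSum (b : 𝒜) (k : ℕ) : 𝒜 :=
  ∑ j ∈ Finset.range k, star (b ^ j) * b ^ j

lemma steinSum_sub_conjugate (b : 𝒜) (k : ℕ) :
    steinSum b k - star b * steinSum b k * b = 1 - star (b ^ k) * b ^ k := by
  have hshift : star b * steinSum b k * b =
      ∑ j ∈ Finset.range k, star (b ^ (j + 1)) * b ^ (j + 1) := by
    simp only [steinSum, Finset.mul_sum, Finset.sum_mul, pow_succ, star_mul, mul_assoc]
  rw [hshift, steinSum, ← Finset.sum_sub_distrib, Finset.sum_range_sub']
  simp

lemma one_le_steinSum [PartialOrder 𝒜] [StarOrderedRing 𝒜] (b : 𝒜) {k : ℕ} (hk : 0 < k) :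
    1 ≤ steinSum b k := by
  have h := Finset.single_le_sum (f := fun j => star (b ^ j) * b ^ j)
    (fun j _ => star_mul_self_nonneg (b ^ j)) (Finset.mem_range.2 hk)
  simpa only [steinSum, pow_zero, star_one, mul_one] using h

end SteinEquation

/-- `p` is a Lyapunov solution for `a`: both `p` and `p a + a* p` are strictly positive.
For matrices, strict positivity is positive definiteness. -/
structure IsLyapunovSolution {𝒜 : Type*} [Ring 𝒜] [Star 𝒜] [PartialOrder 𝒜] (p a : 𝒜) : Prop where
  isStrictlyPositive : IsStrictlyPositive p
  isStrictlyPositive_mul_add : IsStrictlyPositive (p * a + star a * p)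

section CStarAlgebra

variable {𝒜 : Type*} [CStarAlgebra 𝒜] [PartialOrder 𝒜] [StarOrderedRing 𝒜] {a b g h k p : 𝒜}

lemma isStrictlyPositive_one_sub_star_mul_self (hb : ‖b‖ < 1) :
    IsStrictlyPositive (1 - star b * b) := by
  have hnorm : ‖star b * b‖ < 1 := by
    rw [CStarRing.norm_star_mul_self]
    exact mul_lt_one_of_nonneg_of_lt_one_left (norm_nonneg b) hb hb.le
  refine (isUnit_one_sub_of_norm_lt_one hnorm).isStrictlyPositive (sub_nonneg.2 ?_)
  exact (CStarAlgebra.norm_le_one_iff_of_nonneg _ (star_mul_self_nonneg b)).1 hnorm.le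

lemma exists_isStrictlyPositive_sub_conjugate (hb : ∀ z ∈ spectrum ℂ b, ‖z‖ < 1) :
    ∃ p, IsStrictlyPositive p ∧ IsStrictlyPositive (p - star b * p * b) := by
  obtain ⟨k, hnorm, hk⟩ := ((eventually_norm_pow_lt_one hb).and (eventually_gt_atTop 0)).exists
  refine ⟨steinSum b k, isStrictlyPositive_one.of_le (one_le_steinSum b hk), ?_⟩
  rw [steinSum_sub_conjugate]
  exact isStrictlyPositive_one_sub_star_mul_self hnorm

theorem exists_isLyapunovSolution_of_spectrum_re_pos (ha : ∀ z ∈ spectrum ℂ a, 0 < z.re) :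
    ∃ p, IsLyapunovSolution p a := by
  have hunit := isUnit_one_add_of_spectrum_re_pos ha
  obtain ⟨p, hp, hstein⟩ := exists_isStrictlyPositive_sub_conjugate fun z =>
    norm_lt_one_of_mem_spectrum_cayleyTransform ha
  have hconj := hunit.isStrictlyPositive_star_left_conjugate_iff.2 hstein
  have key : star (1 + a) * (p - star (cayleyTransform a) * p * cayleyTransform a) * (1 + a) =
      (2 : ℝ) • (p * a + star a * p) :=
    calc _ = star (1 + a) * p * (1 + a) -
          star (cayleyTransform a * (1 + a)) * p * (cayleyTransform a * (1 + a)) := by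
            rw [star_mul]; noncomm_ring
      _ = _ := by
            rw [cayleyTransform_mul_one_add hunit, two_smul]
            simp only [star_add, star_sub, star_one]
            noncomm_ring
  refine ⟨p, hp, ?_⟩
  rw [key] at hconj
  simpa only [smul_smul, inv_mul_cancel₀ (two_ne_zero' ℝ), one_smul] using
    hconj.smul (inv_pos.2 (two_pos (α := ℝ)))

lemma isUnit_one_add_of_mem_skewAdjoint (hk : k ∈ skewAdjoint 𝒜) : IsUnit (1 + k) := by
  have hmul : (1 + k) * (1 - k) = 1 + star k * k := by
    rw [skewAdjoint.mem_iff.1 hk]; noncomm_ring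
  have hcomm : Commute (1 + k) (1 - k) := by
    rw [commute_iff_eq]; noncomm_ring
  refine (hcomm.isUnit_mul_iff.1 ?_).1
  rw [hmul]
  exact (isStrictlyPositive_one.add_nonneg (star_mul_self_nonneg k)).isUnit

lemma isUnit_add_of_isStrictlyPositive_of_mem_skewAdjoint (hh : IsStrictlyPositive h)
    (hk : k ∈ skewAdjoint 𝒜) : IsUnit (h + k) := by
  set r := h ^ (-(1 / 2) : ℝ)
  have hr : IsStrictlyPositive r := hh.rpow h _
  have hnormalize : r * (h + k) * r = 1 + r * k * star r := by
    rw [mul_add, add_mul, CFC.conjugate_rpow_neg_one_half h hh, hr.isSelfAdjoint.star_eq]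
  have hunit : IsUnit (r * (h + k) * r) := by
    rw [hnormalize]
    exact isUnit_one_add_of_mem_skewAdjoint (skewAdjoint.conjugate hk r)
  rwa [hr.isUnit.mul_right_iff, hr.isUnit.mul_left_iff] at hunit

namespace IsLyapunovSolution

lemma isUnit (hp : IsLyapunovSolution p a) : IsUnit a := by
  have hskew : p * a - star a * p ∈ skewAdjoint 𝒜 := by
    rw [skewAdjoint.mem_iff]
    simp [hp.isStrictlyPositive.isSelfAdjoint.star_eq]
  have htwice :=
    isUnit_add_of_isStrictlyPositive_of_mem_skewAdjoint hp.isStrictlyPositive_mul_add hskew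
  have hsum : p * a + star a * p + (p * a - star a * p) = ((2 : ℝ) • p) * a := by
    rw [smul_mul_assoc, two_smul]
    abel
  rwa [hsum, (hp.isStrictlyPositive.smul (two_pos (α := ℝ))).isUnit.mul_left_iff] at htwice

lemma sub_algebraMap (hp : IsLyapunovSolution p a) {z : ℂ} (hz : z.re ≤ 0) :
    IsLyapunovSolution p (a - algebraMap ℂ 𝒜 z) := by
  refine ⟨hp.isStrictlyPositive, ?_⟩
  have key : p * (a - algebraMap ℂ 𝒜 z) + star (a - algebraMap ℂ 𝒜 z) * p =
      p * a + star a * p + (-(2 * z.re)) • p := by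
    have hshift : p * algebraMap ℂ 𝒜 z + star (algebraMap ℂ 𝒜 z) * p = (2 * z.re) • p := by
      rw [← algebraMap_star_comm, ← Algebra.commutes, ← add_mul, ← map_add, Complex.star_def,
        Complex.add_conj, ← Algebra.smul_def, Complex.coe_smul]
    rw [mul_sub, star_sub, sub_mul, neg_smul, ← hshift]
    abel
  rw [key]
  exact hp.isStrictlyPositive_mul_add.add_nonneg
    (smul_nonneg (by linarith) hp.isStrictlyPositive.nonneg)

theorem re_pos_of_mem_spectrum (hp : IsLyapunovSolution p a) {z : ℂ} (hz : z ∈ spectrum ℂ a) :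
    0 < z.re := by
  by_contra! hre
  rw [spectrum.mem_iff, IsUnit.sub_iff] at hz
  exact hz (hp.sub_algebraMap hre).isUnit

lemma mul_of_commute (hp : IsLyapunovSolution p a) (hg : IsStrictlyPositive g)
    (hgp : Commute g p) : IsLyapunovSolution (g * p) (a * g) := by
  refine ⟨(hg.commute_iff hp.isStrictlyPositive).1 hgp, ?_⟩
  have key : g * p * (a * g) + star (a * g) * (g * p) = g * (p * a + star a * p) * g := by
    calc _ = g * p * (a * g) + g * star a * (g * p) := by
            rw [star_mul, hg.isSelfAdjoint.star_eq]
      _ = g * p * (a * g) + g * star a * (p * g) := by rw [hgp.eq]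
      _ = _ := by noncomm_ring
  rw [key]
  exact .conjugate_of_isUnit_of_isSelfAdjoint _ _ hg.isUnit hg.isSelfAdjoint
    hp.isStrictlyPositive_mul_add

lemma add_of_commute (hp : IsLyapunovSolution p a) (hg : 0 ≤ g) (hgp : Commute g p) :
    IsLyapunovSolution p (a + g) := by
  refine ⟨hp.isStrictlyPositive, ?_⟩
  have key : p * (a + g) + star (a + g) * p = p * a + star a * p + (g * p + g * p) := by
    rw [star_add, hg.isSelfAdjoint.star_eq, mul_add, add_mul, ← hgp.eq]
    abel
  have hgp_nonneg : 0 ≤ g * p := hgp.mul_nonneg hg hp.isStrictlyPositive.nonneg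
  rw [key]
  exact hp.isStrictlyPositive_mul_add.add_nonneg (add_nonneg hgp_nonneg hgp_nonneg)

end IsLyapunovSolution

end CStarAlgebra

section RealMatrix

variable {ι : Type*} [Fintype ι]

lemma re_star_dotProduct_mulVec (W : Matrix ι ι ℂ) (x : ι → ℝ) :
    (star (Complex.ofReal ∘ x) ⬝ᵥ W *ᵥ (Complex.ofReal ∘ x)).re =
      x ⬝ᵥ W.map Complex.re *ᵥ x := by
  simp [dotProduct, mulVec]

variable [DecidableEq ι]

lemma isStrictlyPositive_map_re {W : Matrix ι ι ℂ} (hW : IsStrictlyPositive W) :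
    IsStrictlyPositive (W.map Complex.re) := by
  refine (PosDef.of_dotProduct_mulVec_pos ?_ fun x hx => ?_).isStrictlyPositive
  · ext i j
    simpa using congrArg Complex.re (hW.posDef.isHermitian.apply i j)
  · have hx' : Complex.ofReal ∘ x ≠ 0 := fun h =>
      hx (funext fun i => Complex.ofReal_eq_zero.1 (congrFun h i))
    rw [star_trivial, ← re_star_dotProduct_mulVec]
    exact (Complex.pos_iff.1 (hW.posDef.dotProduct_mulVec_pos hx')).1

lemma star_mapMatrix_ofReal (W : Matrix ι ι ℝ) :
    star (Complex.ofRealHom.mapMatrix W) = Complex.ofRealHom.mapMatrix (star W) := by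
  ext i j
  simp [star_apply]

lemma mapMatrix_ofReal_nonneg {W : Matrix ι ι ℝ} (hW : 0 ≤ W) :
    0 ≤ Complex.ofRealHom.mapMatrix W := by
  obtain ⟨B, rfl⟩ := CStarAlgebra.nonneg_iff_eq_star_mul_self.1 hW
  rw [map_mul, ← star_mapMatrix_ofReal]
  exact star_mul_self_nonneg _

lemma isStrictlyPositive_mapMatrix_ofReal {W : Matrix ι ι ℝ} (hW : IsStrictlyPositive W) :
    IsStrictlyPositive (Complex.ofRealHom.mapMatrix W) :=
  (hW.isUnit.map Complex.ofRealHom.mapMatrix).isStrictlyPositive (mapMatrix_ofReal_nonneg hW.nonneg)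

namespace IsLyapunovSolution

lemma map_re {P : Matrix ι ι ℂ} {A : Matrix ι ι ℝ}
    (hP : IsLyapunovSolution P (Complex.ofRealHom.mapMatrix A)) :
    IsLyapunovSolution (P.map Complex.re) A := by
  refine ⟨isStrictlyPositive_map_re hP.isStrictlyPositive, ?_⟩
  have key : P.map Complex.re * A + star A * P.map Complex.re =
      (P * Complex.ofRealHom.mapMatrix A + star (Complex.ofRealHom.mapMatrix A) * P).map
        Complex.re := by
    ext i j
    simp [mul_apply, star_apply]
  rw [key]
  exact isStrictlyPositive_map_re hP.isStrictlyPositive_mul_add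

lemma mapMatrix_ofReal {P A : Matrix ι ι ℝ} (hP : IsLyapunovSolution P A) :
    IsLyapunovSolution (Complex.ofRealHom.mapMatrix P) (Complex.ofRealHom.mapMatrix A) := by
  refine ⟨isStrictlyPositive_mapMatrix_ofReal hP.isStrictlyPositive, ?_⟩
  rw [star_mapMatrix_ofReal, ← map_mul, ← map_mul, ← map_add]
  exact isStrictlyPositive_mapMatrix_ofReal hP.isStrictlyPositive_mul_add

lemma posStable_mul_of_commute {P A G : Matrix ι ι ℝ} (hP : IsLyapunovSolution P A)
    (hG : IsStrictlyPositive G) (hGP : Commute G P) : PosStable (A * G) := by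
  intro z hz
  refine (hP.mapMatrix_ofReal.mul_of_commute (isStrictlyPositive_mapMatrix_ofReal hG)
    (hGP.map Complex.ofRealHom.mapMatrix)).re_pos_of_mem_spectrum ?_
  rw [← map_mul]
  exact hz

lemma posStable_add_of_commute {P A G : Matrix ι ι ℝ} (hP : IsLyapunovSolution P A)
    (hG : 0 ≤ G) (hGP : Commute G P) : PosStable (A + G) := by
  intro z hz
  refine (hP.mapMatrix_ofReal.add_of_commute (mapMatrix_ofReal_nonneg hG)
    (hGP.map Complex.ofRealHom.mapMatrix)).re_pos_of_mem_spectrum ?_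
  rw [← map_add]
  exact hz

end IsLyapunovSolution

theorem PosStable.exists_isLyapunovSolution {A : Matrix ι ι ℝ} (hA : PosStable A) :
    ∃ P, IsLyapunovSolution P A := by
  obtain ⟨P, hP⟩ :=
    exists_isLyapunovSolution_of_spectrum_re_pos (a := Complex.ofRealHom.mapMatrix A) hA
  exact ⟨P.map Complex.re, hP.map_re⟩

end RealMatrix

lemma isStrictlyPositive_iff_isSymm_and_posDefQ {n : ℕ} {W : Matrix (Fin n) (Fin n) ℝ} :
    IsStrictlyPositive W ↔ W.IsSymm ∧ PosDefQ W := by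
  simp [isStrictlyPositive_iff_posDef, posDef_iff_dotProduct_mulVec, PosDefQ]

theorem stmt19 {n : ℕ} (A : Matrix (Fin n) (Fin n) ℝ) (hA : PosStable A) :
    ∃ P : Matrix (Fin n) (Fin n) ℝ, P.IsSymm ∧ PosDefQ P ∧
      PosDefQ (P * A + Aᵀ * P) ∧
      ∀ G : Matrix (Fin n) (Fin n) ℝ, G.IsSymm → PosDefQ G → G * P = P * G →
        PosStable (A * G) ∧ PosStable (A + G) := by
  obtain ⟨P, hP⟩ := hA.exists_isLyapunovSolution
  obtain ⟨hPsymm, hPpos⟩ := isStrictlyPositive_iff_isSymm_and_posDefQ.1 hP.isStrictlyPositive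
  obtain ⟨-, hPA⟩ := isStrictlyPositive_iff_isSymm_and_posDefQ.1 hP.isStrictlyPositive_mul_add
  refine ⟨P, hPsymm, hPpos, hPA, fun G hGsymm hGpos hGP => ?_⟩
  have hG := isStrictlyPositive_iff_isSymm_and_posDefQ.2 ⟨hGsymm, hGpos⟩
  exact ⟨hP.posStable_mul_of_commute hG hGP, hP.posStable_add_of_commute hG.nonneg hGP⟩
end
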